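/- For every positive integer j, the multiple zeta value with j repeated 2's satisfies ζ(2, 2, ..., 2) = π^{2j}/(2j+1)!. -/

import Mathlib

noncomputable def mzvTwoRep (j : ℕ) : ℝ :=
  ∑' f : {g : Fin j → ℕ+ // StrictAnti g}, ∏ i, (1 : ℝ) / ((f.1 i : ℕ) : ℝ) ^ 2

/-- Strictly decreasing tuples correspond to finite sets of the given size. -/
def antiToFinset (j : ℕ) (g : {g : Fin j → ℕ+ // StrictAnti g}) :
    {s : Finset ℕ // s.card = j} :=
  ⟨Finset.univ.map ⟨fun i => (g.1 i).natPred,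
    fun _ _ h => g.2.injective (PNat.natPred_injective h)⟩, by simp⟩

lemma antiToFinset_bijective (j : ℕ) : Function.Bijective (antiToFinset j) := by
  constructor
  · rintro ⟨f, hf⟩ ⟨g, hg⟩ h
    have key : ∀ (f : {g : Fin j → ℕ+ // StrictAnti g}),
        (fun i => (f.1 (Fin.rev i)).natPred) =
          (antiToFinset j f).1.orderEmbOfFin (antiToFinset j f).2 := by
      intro f
      apply Finset.orderEmbOfFin_unique
      · intro x
        exact Finset.mem_map_of_mem _ (Finset.mem_univ (Fin.rev x))
      · intro a b hab
        exact PNat.natPred_strictMono (f.2 (Fin.rev_lt_rev.2 hab))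
    have h1 := key ⟨f, hf⟩
    rw [h, ← key ⟨g, hg⟩] at h1
    apply Subtype.ext
    funext i
    have := congrFun h1 (Fin.rev i)
    simp only [Fin.rev_rev] at this
    exact PNat.natPred_injective this
  · rintro ⟨s, hs⟩
    refine ⟨⟨fun i => Nat.succPNat (s.orderEmbOfFin hs (Fin.rev i)), ?_⟩, ?_⟩
    · intro a b hab
      exact Nat.succPNat_strictMono ((s.orderEmbOfFin hs).strictMono (Fin.rev_lt_rev.2 hab))
    · apply Subtype.ext
      apply Finset.eq_of_subset_of_card_le
      · intro x hx
        simp only [antiToFinset, Finset.mem_map, Finset.mem_univ, true_and,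
          Function.Embedding.coeFn_mk, Nat.natPred_succPNat] at hx
        obtain ⟨a, rfl⟩ := hx
        exact Finset.orderEmbOfFin_mem _ _ _
      · rw [(antiToFinset j _).2, hs]

lemma mzvTwoRep_eq_tsum (j : ℕ) :
    mzvTwoRep j = ∑' s : {s : Finset ℕ // s.card = j}, ∏ i ∈ s.1, (1 : ℝ) / ((i : ℝ) + 1) ^ 2 := by
  rw [mzvTwoRep, ← (Equiv.ofBijective _ (antiToFinset_bijective j)).tsum_eq]
  refine tsum_congr fun g => ?_
  simp only [Equiv.ofBijective_apply, antiToFinset, Finset.prod_map]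
  refine Finset.prod_congr rfl fun i _ => ?_
  rw [← PNat.natPred_add_one (g.1 i)]
  push_cast
  rfl

lemma summable_norm_term (w : ℂ) : Summable (fun n : ℕ => ‖-w / ((n : ℂ) + 1) ^ 2‖) := by
  have := (summable_pow_div_add w 2 1 Nat.one_lt_two)
  simpa using this

lemma hasSum_mzv (w : ℂ) :
    HasSum (fun k : ℕ => w ^ k * ((-1) ^ k * (mzvTwoRep k : ℂ)))
      (∏' n : ℕ, (1 + -w / ((n : ℂ) + 1) ^ 2)) := by
  have hs := summable_finsetProd_of_summable_norm (summable_norm_term w)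
  rw [tprod_one_add hs]
  have h1 := hs.hasSum
  rw [← (Equiv.sigmaFiberEquiv (Finset.card (α := ℕ))).hasSum_iff] at h1
  have h2 := h1.sigma (fun k => (h1.summable.sigma_factor k).hasSum)
  refine Eq.mp (congrArg (fun f => HasSum f _) ?_) h2
  funext k
  symm
  rw [mzvTwoRep_eq_tsum, Complex.ofReal_tsum, ← tsum_mul_left, ← tsum_mul_left]
  refine tsum_congr fun s => ?_
  simp only [Function.comp, Equiv.sigmaFiberEquiv, Equiv.coe_fn_mk]
  obtain ⟨s, rfl⟩ := s
  push_cast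
  rw [← mul_assoc, ← mul_pow, ← Finset.prod_const, ← Finset.prod_mul_distrib]
  refine Finset.prod_congr rfl fun i _ => ?_
  ring

lemma hasSum_sinc (w : ℂ) :
    HasSum (fun k : ℕ => w ^ k * ((-1) ^ k * ((Real.pi ^ (2 * k) / (Nat.factorial (2 * k + 1)) : ℝ) : ℂ)))
      (∏' n : ℕ, (1 + -w / ((n : ℂ) + 1) ^ 2)) := by
  by_cases hw : w = 0
  · subst hw
    have : (∏' n : ℕ, (1 + -(0:ℂ) / ((n : ℂ) + 1) ^ 2)) = 1 := by simp
    rw [this]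
    convert hasSum_single (0 : ℕ) _ using 1
    · simp
    · intro k hk
      simp [hk]
  · obtain ⟨x, rfl⟩ : ∃ x : ℂ, x ^ 2 = w := IsAlgClosed.exists_pow_nat_eq w two_pos
    have hx : x ≠ 0 := by
      rintro rfl
      simp at hw
    have hpi : (Real.pi : ℂ) ≠ 0 := by exact_mod_cast Real.pi_ne_zero
    have h1 := (multipliable_sineTerm x).hasProd.tendsto_prod_nat
    have h2 := tendsto_nhds_unique h1 (tendsto_euler_sin_prod' hx)
    have h3 : (∏' n : ℕ, (1 + -x ^ 2 / ((n : ℂ) + 1) ^ 2)) =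
      Complex.sin (Real.pi * x) / (Real.pi * x) := h2
    rw [h3]
    refine Eq.mp (congrArg (fun f => HasSum f _) ?_)
      ((Complex.hasSum_sin (Real.pi * x)).div_const (Real.pi * x))
    funext k
    push_cast
    field_simp
    ring

theorem mzv_two_rep_eq (j : ℕ) (hj : 0 < j) :
    mzvTwoRep j = Real.pi ^ (2 * j) / (Nat.factorial (2 * j + 1)) := by
  have key : ∀ c : ℕ → ℂ, (∀ w : ℂ, HasSum (fun k : ℕ => w ^ k * c k)
      (∏' n : ℕ, (1 + -w / ((n : ℂ) + 1) ^ 2))) →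
      HasFPowerSeriesAt (fun w : ℂ => ∏' n : ℕ, (1 + -w / ((n : ℂ) + 1) ^ 2))
        (FormalMultilinearSeries.ofScalars ℂ c) 0 := by
    intro c hc
    rw [hasFPowerSeriesAt_iff]
    refine Filter.Eventually.of_forall fun w => ?_
    simpa using hc w
  have h := (key _ hasSum_mzv).eq_formalMultilinearSeries (key _ hasSum_sinc)
  have h2 := congrArg (fun p => p.coeff j) h
  simp only [FormalMultilinearSeries.coeff_ofScalars] at h2
  have h3 := mul_left_cancel₀ (pow_ne_zero j (by norm_num)) h2
  exact_mod_cast h3
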